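/- Let (E,ρ) be a compact metric space with h_E(δ) → ∞ as δ → 0+, and let γ > 0. Then the following are equivalent: (a) there is a constant c > 1 such that c^{-1}·i^{-1/γ} ≤ g_i(E) ≤ c·i^{-1/γ} for all i ≥ 1; (b) there is a constant c′ > 1 such that c′^{-1}·δ^{-γ} ≤ h_E(δ) ≤ c′·δ^{-γ} for all δ ∈ (0,1). -/

import Mathlib

/-!
On `(0, ∞)` the function `h = hNum E` is finite, positive and nonincreasing, and `gapSeq E` is its
generalized inverse: `h δ ≥ i + 1` gives `δ ≤ g_i`, and `δ < g_i` gives `h δ ≥ i + 1`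
(`le_gapSeq`, `succ_le_hNum_of_lt_gapSeq`). A two-sided power law for one function therefore turns
into a two-sided power law for the other, with the inverse exponent.

Two boundary effects need care. For the upper bound on `h` from the upper bound on the gaps, the
index `i = h δ - 1` may be `0`, in which case `h δ = 1` and the bound follows from `δ < 1`.
Conversely, the gap `g_i` may be attained at scales `δ ≥ 1`, where no bound on `h` is assumed;
there `i` is at most `h (1/2)` and `δ` is at most the diameter of `E`, so only a worse constant is
needed.
-/

open Set Metric Relation Filter

noncomputable section

/-- The `δ`-connected components of a metric space `X`: equivalence classes of the
relation "joined by a finite chain with consecutive distances `≤ δ`". -/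
def deltaComponents (X : Type*) [MetricSpace X] (δ : ℝ) : Set (Set X) :=
  {C | ∃ x : X, C = {y | Relation.ReflTransGen (fun a b => dist a b ≤ δ) x y}}

/-- `h_X(δ)`: the number of `δ`-connected components of `X`. -/
def hNum (X : Type*) [MetricSpace X] (δ : ℝ) : ℕ :=
  Nat.card (deltaComponents X δ)

/-- The gap sequence `g_i(X) = sup {δ > 0 : h_X(δ) ≥ i + 1}`. -/
def gapSeq (X : Type*) [MetricSpace X] (i : ℕ) : ℝ :=
  sSup {δ : ℝ | 0 < δ ∧ i + 1 ≤ hNum X δ}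

/-- The `δ`-connected component of `x`. -/
def deltaComp {X : Type*} [MetricSpace X] (δ : ℝ) (x : X) : Set X :=
  {y | Relation.ReflTransGen (fun a b => dist a b ≤ δ) x y}

section Components

variable {X : Type*} [MetricSpace X]

lemma deltaComp_eq_of_mem {δ : ℝ} {x y : X} (h : y ∈ deltaComp δ x) :
    deltaComp δ x = deltaComp δ y := by
  have : Std.Symm (fun a b : X => dist a b ≤ δ) := ⟨fun a b hab => by rwa [dist_comm]⟩
  have hs : Relation.ReflTransGen (fun a b : X => dist a b ≤ δ) y x :=
    Relation.ReflTransGen.stdSymm.symm _ _ h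
  ext z
  exact ⟨fun hz => hs.trans hz, fun hz => Relation.ReflTransGen.trans h hz⟩

lemma mem_deltaComp_self (δ : ℝ) (x : X) : x ∈ deltaComp δ x := Relation.ReflTransGen.refl

lemma mem_deltaComp_of_dist_le {δ : ℝ} {x y : X} (h : dist x y ≤ δ) : y ∈ deltaComp δ x :=
  Relation.ReflTransGen.single h

lemma deltaComp_mono {δ δ' : ℝ} (h : δ ≤ δ') (x : X) : deltaComp δ x ⊆ deltaComp δ' x :=
  fun _ hy => Relation.ReflTransGen.mono (fun _ _ hab => le_trans hab h) _ _ hy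

lemma finite_deltaComponents [CompactSpace X] {δ : ℝ} (hδ : 0 < δ) :
    (deltaComponents X δ).Finite := by
  obtain ⟨t, htf, hcov⟩ :=
    Metric.totallyBounded_iff.mp (isCompact_univ (X := X)).totallyBounded δ hδ
  refine (htf.image (deltaComp δ)).subset ?_
  rintro C ⟨x, rfl⟩
  obtain ⟨y, hy, hxy⟩ := mem_iUnion₂.mp (hcov (mem_univ x))
  refine ⟨y, hy, deltaComp_eq_of_mem (mem_deltaComp_of_dist_le ?_)⟩
  rw [dist_comm]
  exact (mem_ball.mp hxy).le

lemma hNum_eq_ncard (δ : ℝ) : hNum X δ = (deltaComponents X δ).ncard := rfl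

/-- The map sending a `δ`-component `C` to the union of the `δ'`-components of its points, which is
the single `δ'`-component containing `C`, is onto the set of `δ'`-components. -/
lemma hNum_antitone [CompactSpace X] {δ δ' : ℝ} (hδ : 0 < δ) (h : δ ≤ δ') :
    hNum X δ' ≤ hNum X δ := by
  rw [hNum_eq_ncard, hNum_eq_ncard]
  have hsub : deltaComponents X δ' ⊆
      (fun C : Set X => ⋃ x ∈ C, deltaComp δ' x) '' deltaComponents X δ := by
    rintro C ⟨x, rfl⟩
    refine ⟨deltaComp δ x, ⟨x, rfl⟩, ?_⟩
    change (⋃ y ∈ deltaComp δ x, deltaComp δ' y) = deltaComp δ' x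
    refine subset_antisymm (iUnion₂_subset fun y hy => ?_) ?_
    · exact (deltaComp_eq_of_mem (deltaComp_mono h x hy)).symm.subset
    · exact subset_biUnion_of_mem (u := fun y => deltaComp δ' y) (mem_deltaComp_self δ x)
  exact (ncard_le_ncard hsub ((finite_deltaComponents hδ).image _)).trans
    (ncard_image_le (finite_deltaComponents hδ))

lemma one_le_hNum [CompactSpace X] [Nonempty X] {δ : ℝ} (hδ : 0 < δ) : 1 ≤ hNum X δ := by
  rw [hNum_eq_ncard, Nat.one_le_iff_ne_zero, Ne, ncard_eq_zero (finite_deltaComponents hδ)]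
  exact Set.Nonempty.ne_empty ⟨_, Classical.arbitrary X, rfl⟩

lemma lt_diam_of_two_le_hNum [CompactSpace X] {δ : ℝ} (h : 2 ≤ hNum X δ) :
    δ < Metric.diam (univ : Set X) := by
  by_contra! hd
  rw [hNum_eq_ncard] at h
  have : (deltaComponents X δ).ncard ≤ 1 := by
    refine (ncard_le_one (finite_of_ncard_ne_zero (by omega))).mpr ?_
    rintro _ ⟨x, rfl⟩ _ ⟨y, rfl⟩
    exact deltaComp_eq_of_mem (mem_deltaComp_of_dist_le
      ((dist_le_diam_of_mem isCompact_univ.isBounded (mem_univ x) (mem_univ y)).trans hd))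
  omega

lemma le_gapSeq [CompactSpace X] {δ : ℝ} (hδ : 0 < δ) {i : ℕ} (hi : 1 ≤ i)
    (h : i + 1 ≤ hNum X δ) : δ ≤ gapSeq X i :=
  le_csSup ⟨Metric.diam (univ : Set X),
    fun _ hx => (lt_diam_of_two_le_hNum (le_trans (by omega) hx.2)).le⟩ ⟨hδ, h⟩

lemma succ_le_hNum_of_lt_gapSeq [CompactSpace X] {δ : ℝ} (hδ : 0 < δ) {i : ℕ}
    (h : δ < gapSeq X i) : i + 1 ≤ hNum X δ := by
  have hne : {δ : ℝ | 0 < δ ∧ i + 1 ≤ hNum X δ}.Nonempty := by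
    by_contra hne
    rw [not_nonempty_iff_eq_empty] at hne
    -- an empty supremum has the junk value `0`, which is not above `δ`
    rw [gapSeq, hne, Real.sSup_empty] at h
    linarith
  obtain ⟨δ', hδ', hlt⟩ := exists_lt_of_lt_csSup hne h
  exact hδ'.2.trans (hNum_antitone hδ hlt.le)

end Components

section PowerLaw

variable {E : Type*} [MetricSpace E] [CompactSpace E] {γ : ℝ}

/-- If `h δ < (c * δ)^(-γ)`, the index `i = h δ` satisfies `g_i ≥ c⁻¹ * i^(-1/γ) > δ`, whence
`h δ ≥ i + 1`, which is absurd. -/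
lemma hNum_lower [Nonempty E] (hγ : 0 < γ) {c : ℝ} (hc : 1 < c)
    (h : ∀ i : ℕ, 1 ≤ i → c⁻¹ * (i : ℝ) ^ (-(1 / γ)) ≤ gapSeq E i) {δ : ℝ} (hδ : 0 < δ) :
    (c * δ) ^ (-γ) ≤ hNum E δ := by
  by_contra! hlt
  have h1 : 1 ≤ hNum E δ := one_le_hNum hδ
  have hpos : (0 : ℝ) < hNum E δ := by exact_mod_cast h1
  have hc0 : 0 < c := by linarith
  have h2 : c * δ < (hNum E δ : ℝ) ^ (-(1 / γ)) := by
    have := Real.rpow_lt_rpow_of_neg hpos hlt (z := -(1 / γ)) (by simpa using hγ)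
    rwa [← Real.rpow_mul (by positivity), neg_mul_neg, mul_one_div_cancel hγ.ne',
      Real.rpow_one] at this
  have h3 : δ < gapSeq E (hNum E δ) := by
    refine lt_of_lt_of_le ?_ (h _ h1)
    rwa [inv_mul_eq_div, lt_div_iff₀ hc0, mul_comm]
  have := succ_le_hNum_of_lt_gapSeq hδ h3
  omega

lemma hNum_upper [Nonempty E] (hγ : 0 < γ) {c : ℝ} (hc : 1 < c)
    (h : ∀ i : ℕ, 1 ≤ i → gapSeq E i ≤ c * (i : ℝ) ^ (-(1 / γ))) {δ : ℝ} (hδ : 0 < δ)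
    (hδ1 : δ < 1) : (hNum E δ : ℝ) ≤ 2 * c ^ γ * δ ^ (-γ) := by
  have h1 : 1 ≤ hNum E δ := one_le_hNum hδ
  have hc0 : 0 < c := by linarith
  obtain ⟨i, hi⟩ := Nat.exists_eq_add_of_le' h1
  rcases Nat.eq_zero_or_pos i with rfl | hipos
  · have a1 : 1 ≤ c ^ γ := Real.one_le_rpow hc.le hγ.le
    have a2 : 1 ≤ δ ^ (-γ) := Real.one_le_rpow_of_pos_of_le_one_of_nonpos hδ hδ1.le (by linarith)
    rw [hi]
    push_cast
    nlinarith
  · have hg : δ ≤ c * (i : ℝ) ^ (-(1 / γ)) := (le_gapSeq hδ hipos hi.ge).trans (h i hipos)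
    have hi1 : (1 : ℝ) ≤ i := by exact_mod_cast hipos
    have h3 : δ / c ≤ (i : ℝ) ^ (-(1 / γ)) := by rwa [div_le_iff₀' hc0]
    have h4 : (i : ℝ) ≤ (δ / c) ^ (-γ) := by
      have := Real.rpow_le_rpow_of_nonpos (div_pos hδ hc0) h3 (z := -γ) (by linarith)
      rwa [← Real.rpow_mul (by positivity), neg_mul_neg, one_div_mul_cancel hγ.ne',
        Real.rpow_one] at this
    have h5 : (δ / c) ^ (-γ) = c ^ γ * δ ^ (-γ) := by
      rw [Real.div_rpow hδ.le hc0.le, Real.rpow_neg hc0.le, div_inv_eq_mul, mul_comm]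
    rw [hi]
    push_cast
    linarith

/-- The scale `δ = (2 * c * i)^(-1/γ)` is less than `1` and has `h δ ≥ 2 * i ≥ i + 1`. -/
lemma gapSeq_lower (hγ : 0 < γ) {c : ℝ} (hc : 1 < c)
    (h : ∀ δ : ℝ, 0 < δ → δ < 1 → c⁻¹ * δ ^ (-γ) ≤ (hNum E δ : ℝ)) {i : ℕ} (hi : 1 ≤ i) :
    (2 * c * i) ^ (-(1 / γ)) ≤ gapSeq E i := by
  have hi1 : (1 : ℝ) ≤ i := by exact_mod_cast hi
  have hc0 : 0 < c := by linarith
  have hb : 1 < 2 * c * i := by nlinarith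
  have hpos : 0 < (2 * c * i : ℝ) ^ (-(1 / γ)) := by positivity
  refine le_gapSeq hpos hi ?_
  have := h _ hpos (Real.rpow_lt_one_of_one_lt_of_neg hb (by simpa using hγ))
  rw [← Real.rpow_mul (by positivity), neg_mul_neg, one_div_mul_cancel hγ.ne',
    Real.rpow_one] at this
  have e : c⁻¹ * (2 * c * i) = 2 * i := by field_simp
  rw [e] at this
  have : 2 * i ≤ hNum E ((2 * c * i) ^ (-(1 / γ))) := by exact_mod_cast this
  omega

/-- The first summand of the constant accounts for scales below `1`, the second for scales
between `1` and the diameter. -/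
lemma gapSeq_upper (hγ : 0 < γ) {c : ℝ} (hc : 1 < c)
    (h : ∀ δ : ℝ, 0 < δ → δ < 1 → (hNum E δ : ℝ) ≤ c * δ ^ (-γ)) {i : ℕ} (hi : 1 ≤ i) :
    gapSeq E i ≤ (c ^ (1 / γ) + Metric.diam (univ : Set E) * (hNum E (1 / 2) : ℝ) ^ (1 / γ)) *
      (i : ℝ) ^ (-(1 / γ)) := by
  have hi1 : (1 : ℝ) ≤ i := by exact_mod_cast hi
  have hi0 : (0 : ℝ) < i := by linarith
  have hc0 : 0 < c := by linarith
  have hD : 0 ≤ Metric.diam (univ : Set E) := diam_nonneg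
  have hγ' : 0 < 1 / γ := by positivity
  have hrest : 0 ≤ Metric.diam (univ : Set E) * (hNum E (1 / 2) : ℝ) ^ (1 / γ) *
      (i : ℝ) ^ (-(1 / γ)) := by positivity
  have hmain : 0 ≤ c ^ (1 / γ) * (i : ℝ) ^ (-(1 / γ)) := by positivity
  rw [add_mul]
  refine Real.sSup_le ?_ (by linarith)
  rintro δ ⟨hδ, hle⟩
  rcases lt_or_ge δ 1 with hδ1 | hδ1
  · have h1 : (i : ℝ) ≤ c * δ ^ (-γ) := by
      have : (i : ℝ) + 1 ≤ hNum E δ := by exact_mod_cast hle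
      linarith [h δ hδ hδ1]
    have h2 : (c * δ ^ (-γ)) ^ (-(1 / γ)) ≤ (i : ℝ) ^ (-(1 / γ)) :=
      Real.rpow_le_rpow_of_nonpos hi0 h1 (by linarith)
    rw [Real.mul_rpow hc0.le (by positivity), ← Real.rpow_mul hδ.le, neg_mul_neg,
      mul_one_div_cancel hγ.ne', Real.rpow_one, Real.rpow_neg hc0.le,
      inv_mul_le_iff₀ (by positivity)] at h2
    linarith
  · have h1 : (i : ℝ) ≤ hNum E (1 / 2) := by
      have := hle.trans (hNum_antitone (by norm_num) (show (1 / 2 : ℝ) ≤ δ by linarith))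
      exact_mod_cast (by omega : i ≤ hNum E (1 / 2))
    have h2 : δ ≤ Metric.diam (univ : Set E) :=
      (lt_diam_of_two_le_hNum (le_trans (by omega) hle)).le
    have h3 : 1 ≤ (hNum E (1 / 2) : ℝ) ^ (1 / γ) * (i : ℝ) ^ (-(1 / γ)) := by
      rw [Real.rpow_neg hi0.le, ← div_eq_mul_inv, one_le_div (by positivity)]
      exact Real.rpow_le_rpow hi0.le h1 hγ'.le
    have h4 := mul_le_mul_of_nonneg_left h3 hD
    rw [mul_one, ← mul_assoc] at h4
    linarith

end PowerLaw

theorem gap_power_law_iff_h_power_law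
    (E : Type*) [MetricSpace E] [CompactSpace E]
    (htend : Tendsto (fun δ => hNum E δ) (nhdsWithin 0 (Set.Ioi 0)) atTop)
    (γ : ℝ) (hγ : 0 < γ) :
    (∃ c : ℝ, 1 < c ∧ ∀ i : ℕ, 1 ≤ i →
      c⁻¹ * (i : ℝ) ^ (-(1 / γ)) ≤ gapSeq E i ∧ gapSeq E i ≤ c * (i : ℝ) ^ (-(1 / γ))) ↔
    (∃ c' : ℝ, 1 < c' ∧ ∀ δ : ℝ, 0 < δ → δ < 1 →
      c'⁻¹ * δ ^ (-γ) ≤ (hNum E δ : ℝ) ∧ (hNum E δ : ℝ) ≤ c' * δ ^ (-γ)) := by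
  have hne : Nonempty E := by
    obtain ⟨δ, hδ⟩ := (htend.eventually (eventually_ge_atTop 1)).exists
    obtain ⟨_, x, -⟩ := nonempty_of_ncard_ne_zero (s := deltaComponents E δ)
      (by rw [← hNum_eq_ncard]; omega)
    exact ⟨x⟩
  constructor
  · rintro ⟨c, hc, h⟩
    have hc0 : 0 < c := by linarith
    have a1 : 1 ≤ c ^ γ := Real.one_le_rpow hc.le hγ.le
    refine ⟨2 * c ^ γ, by linarith, fun δ hδ hδ1 => ⟨?_, ?_⟩⟩
    · have h1 := hNum_lower hγ hc (fun i hi => (h i hi).1) hδ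
      rw [Real.mul_rpow hc0.le hδ.le, Real.rpow_neg hc0.le] at h1
      refine le_trans ?_ h1
      gcongr
      linarith
    · exact hNum_upper hγ hc (fun i hi => (h i hi).2) hδ hδ1
  · rintro ⟨c, hc, h⟩
    have hc0 : 0 < c := by linarith
    have hγ' : 0 < 1 / γ := by positivity
    have a1 : 1 < (2 * c) ^ (1 / γ) := Real.one_lt_rpow (by linarith) hγ'
    have hD : 0 ≤ Metric.diam (univ : Set E) := diam_nonneg
    have a2 : 0 ≤ c ^ (1 / γ) + Metric.diam (univ : Set E) * (hNum E (1 / 2) : ℝ) ^ (1 / γ) := by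
      positivity
    refine ⟨(2 * c) ^ (1 / γ) +
      (c ^ (1 / γ) + Metric.diam (univ : Set E) * (hNum E (1 / 2) : ℝ) ^ (1 / γ)),
      by linarith, fun i hi => ⟨?_, ?_⟩⟩
    · have h1 := gapSeq_lower hγ hc (fun δ hδ hδ1 => (h δ hδ hδ1).1) hi
      rw [Real.mul_rpow (by positivity) (by positivity),
        Real.rpow_neg (by positivity : 0 ≤ 2 * c)] at h1
      refine le_trans ?_ h1
      gcongr
      linarith
    · refine (gapSeq_upper hγ hc (fun δ hδ hδ1 => (h δ hδ hδ1).2) hi).trans ?_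
      exact mul_le_mul_of_nonneg_right (by linarith) (by positivity)
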